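/- Fix constants 0 < C₁ < C₂ and 0 < ε < 1/2. There exist infinitely many triples (a, b, n) of natural numbers with εn ≤ a, b ≤ (1−ε)n such that a! · b! divides n! · (a+b−n)! and C₁ log n < a + b − n < C₂ log n. -/

import Mathlib

open Real

def carr (p L m : ℕ) : ℕ :=
  ((Finset.Ico 1 (L + 1)).filter (fun i => p ^ i ≤ m % p ^ i + m % p ^ i)).card

theorem carr_step (p L r d : ℕ) (hr : r < p ^ L) (hd : d < p) :
    carr p L r + (if p ≤ 2 * d then 1 else 0) ≤ carr p (L + 1) (r + p ^ L * d) := by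
  unfold carr
  rw [← Finset.insert_Ico_right_eq_Ico_add_one (show 1 ≤ L + 1 by omega), Finset.filter_insert]
  have h1 : (Finset.Ico 1 (L + 1)).filter (fun i => p ^ i ≤ r % p ^ i + r % p ^ i)
      = (Finset.Ico 1 (L + 1)).filter (fun i => p ^ i ≤ (r + p ^ L * d) % p ^ i + (r + p ^ L * d) % p ^ i) := by
    apply Finset.filter_congr
    intro i hi
    rw [Finset.mem_Ico] at hi
    have : (r + p ^ L * d) % p ^ i = r % p ^ i := by
      have h : p ^ L * d = p ^ i * (p ^ (L - i) * d) := by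
        rw [← mul_assoc, ← pow_add]; congr 2; omega
      rw [h, Nat.add_mul_mod_self_left]
    rw [this]
  rw [h1]
  have h2 : (r + p ^ L * d) % p ^ (L + 1) = r + p ^ L * d := by
    apply Nat.mod_eq_of_lt
    rw [pow_succ]
    nlinarith
  by_cases hpd : p ≤ 2 * d
  · have h3 : p ^ (L + 1) ≤ (r + p ^ L * d) % p ^ (L + 1) + (r + p ^ L * d) % p ^ (L + 1) := by
      rw [h2, pow_succ]
      have := Nat.mul_le_mul_left (p ^ L) hpd
      linarith
    rw [if_pos hpd, if_pos h3, Finset.card_insert_of_notMem (by simp)]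
  · rw [if_neg hpd, add_zero]
    apply Finset.card_le_card
    split_ifs
    · exact Finset.subset_insert _ _
    · exact le_rfl

theorem digit_sum (p : ℕ) (hp : 2 ≤ p) :
    ∑ d ∈ Finset.range p, (1 / 2 : ℝ) ^ (if p ≤ 2 * d then 1 else 0) ≤ 5 / 6 * p := by
  have h1 : ∀ d ∈ Finset.range p, (1 / 2 : ℝ) ^ (if p ≤ 2 * d then 1 else 0)
      = 1 - (if p ≤ 2 * d then (1 / 2 : ℝ) else 0) := by
    intro d _
    split_ifs <;> norm_num
  rw [Finset.sum_congr rfl h1, Finset.sum_sub_distrib, ← Finset.sum_filter]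
  simp only [Finset.sum_const, Finset.card_range, nsmul_eq_mul, mul_one]
  have h2 : Finset.Ico (p - p / 2) p ⊆ (Finset.range p).filter (fun d => p ≤ 2 * d) := by
    intro d hd
    simp only [Finset.mem_Ico, Finset.mem_filter, Finset.mem_range] at *
    omega
  have h3 := Finset.card_le_card h2
  rw [Nat.card_Ico] at h3
  have h4 : p ≤ 3 * ((Finset.range p).filter (fun d => p ≤ 2 * d)).card := by omega
  have h5 : (p : ℝ) ≤ 3 * ((Finset.range p).filter (fun d => p ≤ 2 * d)).card := by
    exact_mod_cast h4
  linarith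

theorem sum_split (a b : ℕ) (f : ℕ → ℝ) :
    ∑ m ∈ Finset.range (a * b), f m
      = ∑ d ∈ Finset.range b, ∑ r ∈ Finset.range a, f (r + a * d) := by
  induction b with
  | zero => simp
  | succ b ih =>
    rw [Finset.sum_range_succ, ← ih, mul_add, mul_one, Finset.sum_range_add]
    congr 1
    exact Finset.sum_congr rfl (fun r _ => by rw [add_comm])

theorem carr_sum (p : ℕ) (hp : 2 ≤ p) (L : ℕ) :
    ∑ m ∈ Finset.range (p ^ L), (1 / 2 : ℝ) ^ (carr p L m) ≤ (5 / 6 * p) ^ L := by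
  induction L with
  | zero => simp [carr]
  | succ L ih =>
    rw [pow_succ, sum_split]
    calc ∑ d ∈ Finset.range p, ∑ r ∈ Finset.range (p ^ L),
            (1 / 2 : ℝ) ^ (carr p (L + 1) (r + p ^ L * d))
        ≤ ∑ d ∈ Finset.range p, ∑ r ∈ Finset.range (p ^ L),
            (1 / 2 : ℝ) ^ (if p ≤ 2 * d then 1 else 0) * (1 / 2 : ℝ) ^ (carr p L r) := by
          apply Finset.sum_le_sum
          intro d hd
          apply Finset.sum_le_sum
          intro r hr
          rw [Finset.mem_range] at hd hr
          rw [← pow_add]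
          apply pow_le_pow_of_le_one (by norm_num) (by norm_num)
          have := carr_step p L r d hr hd
          omega
      _ = (∑ d ∈ Finset.range p, (1 / 2 : ℝ) ^ (if p ≤ 2 * d then 1 else 0)) *
            ∑ r ∈ Finset.range (p ^ L), (1 / 2 : ℝ) ^ (carr p L r) := by
          rw [Finset.sum_mul_sum]
      _ ≤ (5 / 6 * p) * (5 / 6 * p) ^ L := by
          apply mul_le_mul (digit_sum p hp) ih
          · positivity
          · positivity
      _ = _ := by ring

theorem carr_count (p : ℕ) (hp : 2 ≤ p) (J : ℕ) :
    (((Finset.range (p ^ (8 * J))).filter (fun m => carr p (8 * J) m < J)).card : ℝ)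
      ≤ p ^ (8 * J) / 2 ^ J := by
  have h1 : (((Finset.range (p ^ (8 * J))).filter (fun m => carr p (8 * J) m < J)).card : ℝ)
      * (1 / 2) ^ J ≤ (5 / 6 * p) ^ (8 * J) := by
    refine le_trans ?_ (carr_sum p hp (8 * J))
    rw [← nsmul_eq_mul, ← Finset.sum_const]
    refine le_trans ?_ (Finset.sum_le_sum_of_subset_of_nonneg
      (Finset.filter_subset (fun m => carr p (8 * J) m < J) _)
      (fun _ _ _ => by positivity))
    apply Finset.sum_le_sum
    intro m hm
    rw [Finset.mem_filter] at hm
    exact pow_le_pow_of_le_one (by norm_num) (by norm_num) hm.2.le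
  have h2 : ((5 / 6 : ℝ)) ^ (8 * J) ≤ (1 / 4) ^ J := by
    rw [pow_mul]
    exact pow_le_pow_left₀ (by norm_num) (by norm_num) _
  have h3 : (1 / 4 : ℝ) ^ J = (1 / 2) ^ J * (1 / 2) ^ J := by
    rw [← mul_pow]; norm_num
  have hpos : (0 : ℝ) < (1 / 2) ^ J := by positivity
  rw [mul_pow] at h1
  have hp0 : (0 : ℝ) ≤ (p : ℝ) ^ (8 * J) := by positivity
  have h4 := mul_le_mul_of_nonneg_right h2 hp0
  have h5 : (p : ℝ) ^ (8 * J) / 2 ^ J = (1 / 2) ^ J * p ^ (8 * J) := by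
    rw [one_div, inv_pow]; field_simp
  rw [h5]
  rw [h3] at h4
  refine le_of_mul_le_mul_right ?_ hpos
  linarith

theorem periodic_count (P : ℕ → Prop) [DecidablePred P] (q M : ℕ) (hq : 0 < q) (hqM : q ≤ M)
    (hP : Function.Periodic P q) :
    ((Finset.Ico M (2 * M)).filter P).card * q ≤ 2 * M * ((Finset.range q).filter P).card := by
  have h1 : ∀ n, ((Finset.Ico M (M + n * q)).filter P).card
      ≤ n * ((Finset.range q).filter P).card := by
    intro n
    induction n with
    | zero => simp
    | succ n ih =>
      have hu : Finset.Ico M (M + (n + 1) * q)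
          = Finset.Ico M (M + n * q) ∪ Finset.Ico (M + n * q) (M + n * q + q) := by
        rw [Finset.Ico_union_Ico_eq_Ico (by omega) (by omega)]
        congr 1; ring
      rw [hu, Finset.filter_union]
      refine (Finset.card_union_le _ _).trans ?_
      rw [Nat.filter_Ico_card_eq_of_periodic _ _ _ hP, Nat.count_eq_card_filter_range]
      linarith
  have h2 : Finset.Ico M (2 * M) ⊆ Finset.Ico M (M + (M / q + 1) * q) := by
    apply Finset.Ico_subset_Ico_right
    have := Nat.div_add_mod M q
    have := Nat.mod_lt M hq
    nlinarith
  have h3 := (Finset.card_le_card (Finset.filter_subset_filter P h2)).trans (h1 (M / q + 1))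
  have h4 : (M / q + 1) * q ≤ 2 * M := by
    have := Nat.div_mul_le_self M q
    linarith
  calc _ ≤ (M / q + 1) * ((Finset.range q).filter P).card * q := Nat.mul_le_mul_right _ h3
    _ = (M / q + 1) * q * ((Finset.range q).filter P).card := by ring
    _ ≤ _ := Nat.mul_le_mul_right _ h4

theorem carr_periodic (p L J : ℕ) : Function.Periodic (fun m => carr p L m < J) (p ^ L) := by
  intro m
  have : carr p L (m + p ^ L) = carr p L m := by
    unfold carr
    congr 1
    apply Finset.filter_congr
    intro i hi
    rw [Finset.mem_Ico] at hi
    have : (m + p ^ L) % p ^ i = m % p ^ i := by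
      have h : p ^ L = p ^ i * p ^ (L - i) := by
        rw [← pow_add]; congr 1; omega
      rw [h, Nat.add_mul_mod_self_left]
    rw [this]
  simp only [this]

theorem bad1 (p J M : ℕ) (hp : 2 ≤ p) (hM : p ^ (8 * J) ≤ M) :
    (((Finset.Ico M (2 * M)).filter (fun m => carr p (8 * J) m < J)).card : ℝ)
      ≤ 2 * M / 2 ^ J := by
  have hq : 0 < p ^ (8 * J) := by positivity
  have h1 := periodic_count _ (p ^ (8 * J)) M hq hM (carr_periodic p (8 * J) J)
  have h2 := carr_count p hp J
  have h1' : (((Finset.Ico M (2 * M)).filter (fun m => carr p (8 * J) m < J)).card : ℝ)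
      * (p : ℝ) ^ (8 * J) ≤ 2 * M *
      ((Finset.range (p ^ (8 * J))).filter (fun m => carr p (8 * J) m < J)).card := by
    exact_mod_cast h1
  have hq' : (0 : ℝ) < (p : ℝ) ^ (8 * J) := by exact_mod_cast hq
  refine le_of_mul_le_mul_right ?_ hq'
  calc _ ≤ _ := h1'
    _ ≤ 2 * M * ((p : ℝ) ^ (8 * J) / 2 ^ J) := by gcongr
    _ = _ := by ring

theorem bad2 (p J M i : ℕ) (hp : 2 ≤ p) (hM : p ^ J ≤ M) :
    (((Finset.Ico M (2 * M)).filter (fun m => p ^ J ∣ m + i)).card : ℝ)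
      ≤ 2 * M / 2 ^ J := by
  have hq : 0 < p ^ J := by positivity
  have hper : Function.Periodic (fun m => p ^ J ∣ m + i) (p ^ J) := by
    intro m
    have : m + p ^ J + i = m + i + p ^ J := by ring
    simp only [this, Nat.dvd_add_self_right]
  have h1 := periodic_count _ (p ^ J) M hq hM hper
  have h2 : ((Finset.range (p ^ J)).filter (fun m => p ^ J ∣ m + i)).card ≤ 1 := by
    rw [Finset.card_le_one]
    intro a ha b hb
    simp only [Finset.mem_filter, Finset.mem_range] at ha hb
    have hab : a + i ≡ b + i [MOD p ^ J] :=
      ((Nat.modEq_zero_iff_dvd).2 ha.2).trans ((Nat.modEq_zero_iff_dvd).2 hb.2).symm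
    exact Nat.ModEq.eq_of_lt_of_lt (Nat.ModEq.add_right_cancel' i hab) ha.1 hb.1
  have h3 : 2 ^ J ≤ p ^ J := Nat.pow_le_pow_left hp J
  rw [le_div_iff₀ (by positivity)]
  have h4 : ((Finset.Ico M (2 * M)).filter (fun m => p ^ J ∣ m + i)).card * 2 ^ J ≤ 2 * M :=
    calc _ ≤ _ := Nat.mul_le_mul_left _ h3
      _ ≤ _ := h1
      _ ≤ 2 * M * 1 := Nat.mul_le_mul_left _ h2
      _ = _ := by ring
  exact_mod_cast h4

theorem exists_good (k J M : ℕ) (hk : 1 ≤ k) (hJ : 4 * k * (k + 1) < 2 ^ J)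
    (hM : (2 * k) ^ (8 * J) ≤ M) :
    ∃ m, M ≤ m ∧ m < 2 * M ∧ ∀ p, 2 ≤ p → p ≤ 2 * k →
      J ≤ carr p (8 * J) m ∧ ∀ i, 1 ≤ i → i ≤ k → ¬ p ^ J ∣ m + i := by
  classical
  by_contra hcon
  push Not at hcon
  have hsub : Finset.Ico M (2 * M) ⊆ (Finset.Icc 2 (2 * k)).biUnion (fun p =>
      (Finset.Ico M (2 * M)).filter (fun m => carr p (8 * J) m < J) ∪
      (Finset.Icc 1 k).biUnion (fun i =>
        (Finset.Ico M (2 * M)).filter (fun m => p ^ J ∣ m + i))) := by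
    intro m hm
    have hm' := Finset.mem_Ico.1 hm
    obtain ⟨p, hp1, hp2, hp3⟩ := hcon m hm'.1 hm'.2
    rw [Finset.mem_biUnion]
    refine ⟨p, Finset.mem_Icc.2 ⟨hp1, hp2⟩, ?_⟩
    rw [Finset.mem_union]
    by_cases hc : J ≤ carr p (8 * J) m
    · obtain ⟨i, hi1, hi2, hi3⟩ := hp3 hc
      right
      rw [Finset.mem_biUnion]
      exact ⟨i, Finset.mem_Icc.2 ⟨hi1, hi2⟩, Finset.mem_filter.2 ⟨hm, hi3⟩⟩
    · left
      exact Finset.mem_filter.2 ⟨hm, by omega⟩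
  have h1 := (Finset.card_le_card hsub).trans Finset.card_biUnion_le
  have hMpos : 0 < M := lt_of_lt_of_le (by positivity) hM
  rw [Nat.card_Ico] at h1
  have h2 : (M : ℝ) ≤ ∑ p ∈ Finset.Icc 2 (2 * k), ((k : ℝ) + 1) * (2 * M / 2 ^ J) := by
    have h1' : M ≤ _ := le_trans (by omega) h1
    refine le_trans (Nat.cast_le.2 h1') ?_
    rw [Nat.cast_sum]
    apply Finset.sum_le_sum
    intro p hp
    rw [Finset.mem_Icc] at hp
    have hpM : p ^ (8 * J) ≤ M := (Nat.pow_le_pow_left hp.2 _).trans hM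
    have hpM2 : p ^ J ≤ M := (Nat.pow_le_pow_right (by omega) (by omega)).trans hpM
    refine le_trans (Nat.cast_le.2 ((Finset.card_union_le _ _).trans
      (Nat.add_le_add_left Finset.card_biUnion_le _))) ?_
    rw [Nat.cast_add, Nat.cast_sum, add_mul, one_mul, add_comm]
    refine add_le_add ?_ (bad1 p J M hp.1 hpM)
    refine (Finset.sum_le_sum (fun i _ => bad2 p J M i hp.1 hpM2)).trans ?_
    simp
  rw [Finset.sum_const, Nat.card_Icc, nsmul_eq_mul] at h2
  have h3 : ((2 * k + 1 - 2 : ℕ) : ℝ) ≤ 2 * k := by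
    have : 2 * k + 1 - 2 ≤ 2 * k := by omega
    exact_mod_cast this
  have hJ' : (4 * k * (k + 1) : ℝ) < 2 ^ J := by exact_mod_cast hJ
  have hM' : (0 : ℝ) < M := by exact_mod_cast hMpos
  have h4 : (M : ℝ) ≤ 2 * k * (((k : ℝ) + 1) * (2 * M / 2 ^ J)) :=
    h2.trans (mul_le_mul_of_nonneg_right h3 (by positivity))
  have h5 : 2 * k * (((k : ℝ) + 1) * (2 * M / 2 ^ J)) = 4 * k * (k + 1) * M / 2 ^ J := by ring
  rw [h5, le_div_iff₀ (by positivity)] at h4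
  nlinarith

theorem good_dvd (k J m : ℕ) (h : ∀ p, 2 ≤ p → p ≤ 2 * k →
      J ≤ carr p (8 * J) m ∧ ∀ i, 1 ≤ i → i ≤ k → ¬ p ^ J ∣ m + i) :
    (m + k).choose k ∣ (m + m).choose m := by
  rw [← Nat.factorization_prime_le_iff_dvd (Nat.choose_pos (by omega)).ne'
    (Nat.choose_pos (by omega)).ne']
  intro p hp
  set b := Nat.log p (m + k) + Nat.log p (m + m) + 8 * J + 1 with hb
  rw [Nat.factorization_choose' (b := b) hp (by omega),
    Nat.factorization_choose' (b := b) hp (by omega)]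
  by_cases hpk : p ≤ 2 * k
  · obtain ⟨h1, h2⟩ := h p hp.two_le hpk
    have h3 : carr p (8 * J) m ≤
        ((Finset.Ico 1 b).filter (fun i => p ^ i ≤ m % p ^ i + m % p ^ i)).card := by
      apply Finset.card_le_card
      apply Finset.filter_subset_filter
      apply Finset.Ico_subset_Ico_right
      omega
    refine le_trans ?_ (h1.trans h3)
    have h4 : (Finset.Ico 1 b).filter (fun i => p ^ i ≤ k % p ^ i + m % p ^ i)
        ⊆ Finset.Ico 1 J := by
      intro j hj
      simp only [Finset.mem_filter, Finset.mem_Ico] at hj ⊢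
      refine ⟨hj.1.1, ?_⟩
      by_contra hjJ
      push Not at hjJ
      have hpos : 0 < p ^ j := pow_pos hp.pos j
      have hmod := Nat.mod_lt m hpos
      have hkmod := Nat.mod_le k (p ^ j)
      apply h2 (p ^ j - m % p ^ j) (by omega) (by omega)
      refine (pow_dvd_pow p hjJ).trans ?_
      have hdm := Nat.div_add_mod m (p ^ j)
      have : m + (p ^ j - m % p ^ j) = p ^ j * (m / p ^ j) + p ^ j := by omega
      rw [this]
      exact (Dvd.intro _ rfl).add dvd_rfl
    have h5 := Finset.card_le_card h4
    rw [Nat.card_Ico] at h5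
    omega
  · apply Finset.card_le_card
    intro j hj
    simp only [Finset.mem_filter, Finset.mem_Ico] at hj ⊢
    refine ⟨hj.1, ?_⟩
    have h1 : p ≤ p ^ j := Nat.le_self_pow (by omega) p
    have h2 := Nat.mod_le k (p ^ j)
    omega

theorem choose_to_fact (k m : ℕ) (h : (m + k).choose k ∣ (m + m).choose m) :
    m.factorial * (m + k).factorial ∣ (m + m).factorial * k.factorial := by
  obtain ⟨c, hc⟩ := h
  have h1 := Nat.add_choose_mul_factorial_mul_factorial m m
  have h2 := Nat.add_choose_mul_factorial_mul_factorial m k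
  refine ⟨c, ?_⟩
  rw [← h1, ← h2, hc]
  ring

theorem asymp (C : ℝ) (hC : 0 < C) : ∀ᶠ k : ℕ in Filter.atTop,
    ∃ J : ℕ, 4 * k * (k + 1) < 2 ^ J ∧ ((2 * k : ℕ) : ℝ) ^ (8 * J) ≤ Real.exp (k / C) := by
  have hl : (0 : ℝ) < Real.log 2 := Real.log_pos (by norm_num)
  have h1 := (isLittleO_pow_log_id_atTop (n := 2)).bound
    (show (0 : ℝ) < Real.log 2 / (64 * C) by positivity)
  have ht : Filter.Tendsto (fun k : ℕ => (4 : ℝ) * k) Filter.atTop Filter.atTop :=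
    (tendsto_natCast_atTop_atTop).const_mul_atTop (by norm_num)
  filter_upwards [ht.eventually h1, Filter.eventually_ge_atTop 1] with k hk hk1
  refine ⟨Nat.log 2 (4 * k * (k + 1)) + 1, Nat.lt_pow_succ_log_self (by norm_num) _, ?_⟩
  set J := Nat.log 2 (4 * k * (k + 1)) + 1 with hJ
  have hk1' : (1 : ℝ) ≤ k := by exact_mod_cast hk1
  have h2 : 2 ^ J ≤ 16 * k ^ 2 := by
    have := Nat.pow_log_le_self 2 (show 4 * k * (k + 1) ≠ 0 by positivity)
    rw [hJ, pow_succ]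
    nlinarith
  have h2' : (2 : ℝ) ^ J ≤ (4 * k) ^ 2 := by
    have : (2 : ℝ) ^ J ≤ 16 * k ^ 2 := by exact_mod_cast h2
    nlinarith
  have h3 := Real.log_le_log (by positivity) h2'
  rw [Real.log_pow, Real.log_pow] at h3
  rw [← Real.log_le_iff_le_exp (by positivity), Real.log_pow]
  have h4 : Real.log ((2 * k : ℕ) : ℝ) ≤ Real.log (4 * k) := by
    apply Real.log_le_log (by positivity)
    push_cast
    linarith
  have h5 : 0 ≤ Real.log (4 * k) := Real.log_nonneg (by linarith)
  simp only [id, Real.norm_eq_abs, abs_pow, sq_abs] at hk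
  rw [abs_of_nonneg (show (0 : ℝ) ≤ 4 * k by positivity)] at hk
  push_cast at *
  have h6 : (8 * (J : ℝ)) * Real.log (2 * k) * Real.log 2 ≤ 16 * Real.log (4 * k) ^ 2 :=
    calc (8 * (J : ℝ)) * Real.log (2 * k) * Real.log 2
        ≤ (8 * (J : ℝ)) * Real.log (4 * k) * Real.log 2 := by gcongr
      _ = 8 * (J * Real.log 2) * Real.log (4 * k) := by ring
      _ ≤ 8 * (2 * Real.log (4 * k)) * Real.log (4 * k) := by gcongr
      _ = _ := by ring
  have h7 : 16 * (Real.log 2 / (64 * C) * (4 * k)) = k / C * Real.log 2 := by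
    field_simp; ring
  refine le_of_mul_le_mul_right ?_ hl
  linarith

theorem main_ev (C₁ C₂ ε : ℝ) (hC₁ : 0 < C₁) (hC : C₁ < C₂) (hε1 : ε < 1 / 2) :
    ∀ᶠ k : ℕ in Filter.atTop, ∃ m : ℕ,
      m.factorial * (m + k).factorial ∣ (m + m).factorial * k.factorial ∧
      (k : ℝ) ≤ (1 - 2 * ε) * m ∧
      C₁ * Real.log ((m + m : ℕ) : ℝ) < k ∧ k < C₂ * Real.log ((m + m : ℕ) : ℝ) := by
  have hC2 : 0 < C₂ := hC₁.trans hC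
  have hd : 0 < 1 - C₁ / C₂ := by rw [sub_pos, div_lt_one hC2]; exact hC
  have hcast : Filter.Tendsto (fun k : ℕ => (k : ℝ)) Filter.atTop Filter.atTop :=
    tendsto_natCast_atTop_atTop
  have e1 : ∀ᶠ k : ℕ in Filter.atTop, C₁ * Real.log 8 < (1 - C₁ / C₂) * k :=
    (hcast.const_mul_atTop hd).eventually_gt_atTop _
  have e2 : ∀ᶠ k : ℕ in Filter.atTop, (k : ℝ) ≤ (1 - 2 * ε) * Real.exp (k / C₂) := by
    have hdiv : Filter.Tendsto (fun k : ℕ => (k : ℝ) / C₂) Filter.atTop Filter.atTop :=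
      hcast.atTop_div_const hC2
    have h1 := (Real.tendsto_exp_div_pow_atTop 1).comp hdiv
    have hε : 0 < 1 - 2 * ε := by linarith
    filter_upwards [h1.eventually_ge_atTop (C₂ / (1 - 2 * ε)), Filter.eventually_ge_atTop 1]
      with k hk hk1
    have hk1' : (0 : ℝ) < k := by exact_mod_cast hk1
    simp only [Function.comp, pow_one] at hk
    rw [div_le_div_iff₀ hε (by positivity)] at hk
    have : C₂ * ((k : ℝ) / C₂) = k := by field_simp
    linarith
  filter_upwards [e1, e2, asymp C₂ hC2, Filter.eventually_ge_atTop 1] with k h1 h2 h3 hk1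
  obtain ⟨J, hJ1, hJ2⟩ := h3
  set E := Real.exp (k / C₂) with hE
  have hE1 : 1 ≤ E := Real.one_le_exp (by positivity)
  have hM1 : E ≤ (⌈E⌉₊ : ℝ) := Nat.le_ceil E
  have hM2 : (⌈E⌉₊ : ℝ) < E + 1 := Nat.ceil_lt_add_one (by linarith)
  set M := ⌈E⌉₊ with hM
  have hJM : (2 * k) ^ (8 * J) ≤ M := by
    have := hJ2.trans hM1
    exact_mod_cast this
  obtain ⟨m, hm1, hm2, hm3⟩ := exists_good k J M hk1 hJ1 hJM
  have hm1' : (M : ℝ) ≤ m := by exact_mod_cast hm1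
  have hm2' : (m : ℝ) < 2 * M := by exact_mod_cast hm2
  have hlE : Real.log E = k / C₂ := Real.log_exp _
  have hcm : ((m + m : ℕ) : ℝ) = m + m := by push_cast; rfl
  refine ⟨m, choose_to_fact k m (good_dvd k J m hm3), ?_, ?_, ?_⟩
  · refine h2.trans ?_
    apply mul_le_mul_of_nonneg_left (hM1.trans hm1')
    linarith
  · have : Real.log ((m + m : ℕ) : ℝ) ≤ Real.log (8 * E) := by
      rw [hcm]
      apply Real.log_le_log <;> linarith
    rw [Real.log_mul (by norm_num) (by linarith), hlE] at this
    have h5 := mul_le_mul_of_nonneg_left this hC₁.le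
    have h6 : C₁ * (Real.log 8 + k / C₂) = C₁ * Real.log 8 + C₁ / C₂ * k := by ring
    linarith
  · have : Real.log E < Real.log ((m + m : ℕ) : ℝ) := by
      rw [hcm]
      apply Real.log_lt_log <;> linarith
    rw [hlE, div_lt_iff₀ hC2] at this
    linarith

theorem stmt14 (C₁ C₂ ε : ℝ) (hC₁ : 0 < C₁) (hC : C₁ < C₂)
    (hε0 : 0 < ε) (hε1 : ε < 1 / 2) :
    {x : ℕ × ℕ × ℕ |
        ε * x.2.2 ≤ (x.1 : ℝ) ∧ (x.1 : ℝ) ≤ (1 - ε) * x.2.2 ∧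
        ε * x.2.2 ≤ (x.2.1 : ℝ) ∧ (x.2.1 : ℝ) ≤ (1 - ε) * x.2.2 ∧
        x.1.factorial * x.2.1.factorial ∣
          x.2.2.factorial * (x.1 + x.2.1 - x.2.2).factorial ∧
        C₁ * Real.log x.2.2 < ((x.1 + x.2.1 - x.2.2 : ℕ) : ℝ) ∧
        ((x.1 + x.2.1 - x.2.2 : ℕ) : ℝ) < C₂ * Real.log x.2.2}.Infinite := by
  apply Set.Infinite.of_image (fun x : ℕ × ℕ × ℕ => x.1 + x.2.1 - x.2.2)
  rw [Set.infinite_iff_exists_gt]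
  intro N
  obtain ⟨k, ⟨m, hdvd, hk, hl1, hl2⟩, hkN⟩ :=
    ((main_ev C₁ C₂ ε hC₁ hC hε1).and (Filter.eventually_gt_atTop N)).exists
  have hsub : m + (m + k) - (m + m) = k := by omega
  refine ⟨k, ⟨(m, m + k, m + m), ?_, hsub⟩, hkN⟩
  simp only [Set.mem_setOf_eq, hsub]
  have hm0 : (0 : ℝ) ≤ m := by positivity
  have hk0 : (0 : ℝ) ≤ k := by positivity
  refine ⟨?_, ?_, ?_, ?_, hdvd, hl1, hl2⟩
  all_goals push_cast; nlinarith
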